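/- Let $F$ be a field, let $r \ge 0$, let $u \in F^{\times}$, and let $a, b_1, \ldots, b_r$ be integers with $a > 0$ and $\gcd(a, b_1, \ldots, b_r) = 1$. Then the quotient of the polynomial ring in one variable $z$ over the Laurent polynomial algebra $F[x_1^{\pm 1}, \ldots, x_r^{\pm 1}]$ by the principal ideal generated by $z^a - u \prod_{j=1}^{r} x_j^{b_j}$ is isomorphic, as an $F$-algebra, to the Laurent polynomial algebra $F[x_1^{\pm 1}, \ldots, x_r^{\pm 1}]$. -/

import Mathlib

/-!
Put `M = ℤ^r` and `v = (b, -a) ∈ M × ℤ`. Sending `x^m z^k` to `(m, k)` presents the quotient ring as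
the group algebra of `M × ℤ` with `v` identified with the scalar `u⁻¹`. Since
`gcd(a, b₁, …, b_r) = 1`, Bézout yields a linear form `l` on `M × ℤ` with `l v = 1`
(`exists_linear_form`), so `M × ℤ = ker l ⊕ ℤ v`, and `ker l` is free of rank `r`
(`exists_splitting`). Twisting by the character `w ↦ u ^ (-l w)`, which takes the value `u⁻¹` at `v`,
absorbs the scalar and identifies the quotient with the group algebra of `ker l`
(`iso_of_splitting`).
-/

/-- Bézout: a vector `(b, -a)` with coprime entries takes the value `1` under some linear form. -/
theorem exists_linear_form (r : ℕ) (a : ℕ) (b : Fin r → ℤ)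
    (hgcd : Int.gcd (a : ℤ) (Finset.univ.gcd b) = 1) :
    ∃ l : ((Fin r → ℤ) × ℤ) →ₗ[ℤ] ℤ, l (b, -(a : ℤ)) = 1 := by
  obtain ⟨c, hc⟩ := Finset.gcd_eq_sum_mul Finset.univ b
  have h := Int.gcd_eq_gcd_ab (a : ℤ) (Finset.univ.gcd b)
  rw [hgcd] at h
  set s := Int.gcdA (a : ℤ) (Finset.univ.gcd b)
  set t := Int.gcdB (a : ℤ) (Finset.univ.gcd b)
  refine ⟨(t • Fintype.linearCombination ℤ c).coprod (-s • LinearMap.id), ?_⟩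
  simp only [LinearMap.coprod_apply, LinearMap.smul_apply, Fintype.linearCombination_apply,
    LinearMap.id_apply, smul_eq_mul]
  push_cast at h
  rw [h, hc]
  ring_nf

/-- A linear form `l` with `l v = 1` splits `ℤ^r × ℤ` as `ker l ⊕ ℤ v`; here `ker l`, which is free
of rank `r`, is replaced by `ℤ^r`, with inclusion `i` and projection `p` along `v`. -/
theorem exists_splitting (r : ℕ) (l : ((Fin r → ℤ) × ℤ) →ₗ[ℤ] ℤ) (v : (Fin r → ℤ) × ℤ)
    (hv : l v = 1) :
    ∃ (i : (Fin r → ℤ) →ₗ[ℤ] (Fin r → ℤ) × ℤ) (p : ((Fin r → ℤ) × ℤ) →ₗ[ℤ] (Fin r → ℤ)),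
      (∀ n, p (i n) = n) ∧ (∀ n, l (i n) = 0) ∧ ∀ w, i (p w) = w - l w • v := by
  have hsurj : Function.Surjective l := fun k =>
    ⟨k • v, by rw [map_smul, hv, smul_eq_mul, mul_one]⟩
  have hrank : Module.finrank ℤ (LinearMap.ker l) = r := by
    have := Submodule.finrank_quotient_add_finrank (LinearMap.ker l)
    rw [(l.quotKerEquivOfSurjective hsurj).finrank_eq] at this
    simp at this
    omega
  let e : LinearMap.ker l ≃ₗ[ℤ] (Fin r → ℤ) :=
    LinearEquiv.ofFinrankEq _ _ (by simp [hrank])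
  let q : ((Fin r → ℤ) × ℤ) →ₗ[ℤ] LinearMap.ker l :=
    (LinearMap.id - l.smulRight v).codRestrict _ fun w => by
      rw [LinearMap.mem_ker, LinearMap.sub_apply, LinearMap.smulRight_apply, map_sub, map_smul, hv,
        LinearMap.id_apply, smul_eq_mul, mul_one, sub_self]
  refine ⟨(LinearMap.ker l).subtype ∘ₗ e.symm.toLinearMap, e.toLinearMap ∘ₗ q, ?_, ?_, ?_⟩
  · intro n
    have : q (e.symm n : (Fin r → ℤ) × ℤ) = e.symm n := by
      ext1
      simp [q]
    simp [this]
  · intro n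
    simp
  · intro w
    simp [q]

/-- If `M × ℤ` splits as `N ⊕ ℤ v` with `v = (b, -a)` and `l` the coordinate along `v`, the quotient
of `F[M][z]` by `z ^ a - u x ^ b` is `F[N]`. The quotient enters as an algebra `Q` with a map `k`
from `F[M][z]` having its universal property for maps to `F[N]` and to itself. -/
theorem iso_of_splitting {F M N Q : Type*} [Field F] [AddCommGroup M] [AddCommGroup N]
    [CommRing Q] [Algebra F Q]
    (u : Fˣ) (a : ℕ) (ha : 0 < a) (b : M)
    (k : Polynomial (AddMonoidAlgebra F M) →ₐ[F] Q)
    (hkrel : k Polynomial.X ^ a = k (Polynomial.C (AddMonoidAlgebra.single b (u : F))))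
    (hkext : ∀ φ ψ : Q →ₐ[F] Q, φ.comp k = ψ.comp k → φ = ψ)
    (hklift : ∀ φ : Polynomial (AddMonoidAlgebra F M) →ₐ[F] AddMonoidAlgebra F N,
      φ (Polynomial.X ^ a - Polynomial.C (AddMonoidAlgebra.single b (u : F))) = 0 →
        ∃ f : Q →ₐ[F] AddMonoidAlgebra F N, ∀ x, f (k x) = φ x)
    (l : (M × ℤ) →ₗ[ℤ] ℤ) (hl : l (b, -(a : ℤ)) = 1)
    (i : N →ₗ[ℤ] M × ℤ) (p : (M × ℤ) →ₗ[ℤ] N)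
    (hpi : ∀ n, p (i n) = n) (hli : ∀ n, l (i n) = 0)
    (hip : ∀ w, i (p w) = w - l w • (b, -(a : ℤ))) :
    Nonempty (Q ≃ₐ[F] AddMonoidAlgebra F N) := by
  -- Image in `F[N]` of the monomial `x^m z^n`, `w = (m, n)`; the factor `u ^ (-l w)` absorbs `u`.
  let T : Multiplicative (M × ℤ) →* AddMonoidAlgebra F N :=
    { toFun w := AddMonoidAlgebra.single (p w.toAdd) ((u ^ (-l w.toAdd) : Fˣ) : F)
      map_one' := by simp [AddMonoidAlgebra.one_def]
      map_mul' x y := by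
        simp only [toAdd_mul, map_add, AddMonoidAlgebra.single_mul_single, neg_add, zpow_add,
          Units.val_mul] }
  have hT (w : M × ℤ) : T (.ofAdd w) = AddMonoidAlgebra.single (p w) ((u ^ (-l w) : Fˣ) : F) := rfl
  let f₀ : AddMonoidAlgebra F M →ₐ[F] AddMonoidAlgebra F N :=
    AddMonoidAlgebra.lift F _ M (T.comp (AddMonoidHom.inl M ℤ).toMultiplicative)
  have hf₀ (m : M) (c : F) : f₀ (AddMonoidAlgebra.single m c) = c • T (.ofAdd (m, 0)) := by
    simp [f₀, AddMonoidAlgebra.lift_single]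
  let f₁ : Polynomial (AddMonoidAlgebra F M) →ₐ[F] AddMonoidAlgebra F N :=
    Polynomial.eval₂AlgHom f₀ (T (.ofAdd (0, 1))) fun _ => Commute.all _ _
  have hf₁C (x) : f₁ (Polynomial.C x) = f₀ x := by simp [f₁]
  have hf₁X : f₁ Polynomial.X = T (.ofAdd (0, 1)) := by simp [f₁]
  have hpv : p (b, -(a : ℤ)) = 0 := by
    have := hip (b, -(a : ℤ))
    rw [hl, one_smul, sub_self] at this
    rw [← hpi (p _), this, map_zero]
  have hrel : f₁ (Polynomial.X ^ a - Polynomial.C (AddMonoidAlgebra.single b (u : F))) = 0 := by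
    have h0a : ((0, (a : ℤ)) : M × ℤ) = (b, 0) - (b, -(a : ℤ)) := by simp
    rw [map_sub, map_pow, hf₁X, hf₁C, hf₀, ← map_pow, ← ofAdd_nsmul, sub_eq_zero, hT, hT]
    have : a • ((0, 1) : M × ℤ) = (0, (a : ℤ)) := by simp
    rw [this, h0a, map_sub, map_sub, hpv, hl, AddMonoidAlgebra.smul_single, sub_zero, smul_eq_mul,
      neg_sub, sub_eq_add_neg, zpow_add, zpow_one, Units.val_mul]
  obtain ⟨f, hf⟩ := hklift f₁ hrel
  let X₀ : Multiplicative M →* Q :=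
    ((k : _ →* _).comp (Polynomial.C : _ →+* _).toMonoidHom).comp (AddMonoidAlgebra.of F M)
  have hX₀ (m : M) : X₀ (.ofAdd m) = k (Polynomial.C (AddMonoidAlgebra.single m 1)) := rfl
  have hC (m : M) (c : F) :
      k (Polynomial.C (AddMonoidAlgebra.single m c)) =
        algebraMap F Q c * X₀ (.ofAdd m) := by
    rw [hX₀, ← k.commutes, ← map_mul, Polynomial.algebraMap_apply, ← Polynomial.C_mul,
      ← Algebra.smul_def, AddMonoidAlgebra.smul_single, smul_eq_mul, mul_one]
  -- In `Q`, the class of `z` is a unit because its `a`-th power is.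
  have hz : IsUnit (k Polynomial.X) := by
    rw [← isUnit_pow_iff ha.ne', hkrel, hC]
    exact (u.isUnit.map _).mul ((Group.isUnit (Multiplicative.ofAdd b)).map X₀)
  obtain ⟨z, hz⟩ := hz
  -- The monomials `x^m z^n` as units of `Q`.
  let S : Multiplicative (M × ℤ) →* Qˣ :=
    { toFun w := X₀.toHomUnits (.ofAdd w.toAdd.1) * z ^ w.toAdd.2
      map_one' := by simp
      map_mul' x y := by
        simp only [toAdd_mul, Prod.fst_add, Prod.snd_add, ofAdd_add, map_mul, zpow_add]
        rw [mul_mul_mul_comm] }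
  have hS (m : M) (n : ℤ) : S (.ofAdd (m, n)) = X₀.toHomUnits (.ofAdd m) * z ^ n := rfl
  let U : Qˣ :=
    Units.map (algebraMap F Q).toMonoidHom u
  have hSv : S (.ofAdd (b, -(a : ℤ))) = U⁻¹ := by
    rw [hS, zpow_neg, zpow_natCast, mul_inv_eq_iff_eq_mul, eq_inv_mul_iff_mul_eq]
    ext
    rw [Units.val_mul, Units.val_pow_eq_pow_val, hz, hkrel, hC]
    rfl
  have hSip (w : M × ℤ) : S (.ofAdd (i (p w))) = S (.ofAdd w) * U ^ l w := by
    rw [hip, ofAdd_sub, ofAdd_zsmul, map_div, map_zpow, hSv, inv_zpow, div_inv_eq_mul]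
  let g : AddMonoidAlgebra F N →ₐ[F] Q :=
    AddMonoidAlgebra.lift F _ N ((Units.coeHom _).comp (S.comp i.toAddMonoidHom.toMultiplicative))
  have hg (n : N) (c : F) : g (AddMonoidAlgebra.single n c) =
      algebraMap F Q c * (S (.ofAdd (i n)) : Q) := by
    exact (AddMonoidAlgebra.lift_single _ _ _).trans (Algebra.smul_def _ _)
  have hgT (w : M × ℤ) : g (T (.ofAdd w)) = S (.ofAdd w) := by
    have hU : algebraMap F Q ((u ^ (-l w) : Fˣ) : F) = ((U ^ (-l w) : Units _) : Q) := by
      rw [← map_zpow]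
      rfl
    rw [hT, hg, hSip, hU, ← Units.val_mul, mul_left_comm, ← zpow_add]
    simp
  have hfS (w : M × ℤ) : f (S (.ofAdd w)) = T (.ofAdd w) := by
    -- Both sides are multiplicative in `w`; they agree on `(m, 0)` and on `(0, 1)`.
    have hXf (m : M) : f (X₀ (.ofAdd m)) = T (.ofAdd (m, 0)) := by
      rw [hX₀]
      rw [hf, hf₁C, hf₀, one_smul]
    have hzf : Units.map (f : _ →* _) z = T.toHomUnits (.ofAdd (0, 1)) := by
      ext1
      change f z = T (.ofAdd (0, 1))
      rw [hz, hf, hf₁X]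
    have hXf' (m : M) :
        Units.map (f : _ →* _) (X₀.toHomUnits (.ofAdd m)) = T.toHomUnits (.ofAdd (m, 0)) := by
      ext1
      exact hXf m
    have : Units.map (f : _ →* _) (S (.ofAdd w)) = T.toHomUnits (.ofAdd w) := by
      obtain ⟨m, n⟩ := w
      rw [hS, map_mul, map_zpow, hzf, hXf', ← map_zpow, ← map_mul, ← ofAdd_zsmul, ← ofAdd_add]
      simp
    exact congrArg Units.val this
  refine ⟨AlgEquiv.ofAlgHom f g ?_ ?_⟩
  · refine AddMonoidAlgebra.algHom_ext (fun n => ?_) (Subsingleton.elim _ _)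
    rw [AlgHom.comp_apply, hg, map_one, one_mul, hfS, hT, hpi, hli]
    simp
  · refine hkext _ _ (Polynomial.algHom_ext' ?_ ?_)
    · refine AddMonoidAlgebra.algHom_ext (fun m => ?_) (Subsingleton.elim _ _)
      change g (f (k (Polynomial.C _))) = k (Polynomial.C _)
      rw [hf, hf₁C, hf₀, one_smul, hgT, hS, zpow_zero, mul_one, ← hX₀]
      rfl
    · change g (f (k Polynomial.X)) = k Polynomial.X
      rw [hf, hf₁X, hgT, hS, zpow_one, ← hz]
      simp

/-- The concrete quotient has the universal property that `iso_of_splitting` asks of `Q`. -/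
theorem quotient_iso_of_splitting {F M N : Type*} [Field F] [AddCommGroup M] [AddCommGroup N]
    (u : Fˣ) (a : ℕ) (ha : 0 < a) (b : M)
    (l : (M × ℤ) →ₗ[ℤ] ℤ) (hl : l (b, -(a : ℤ)) = 1)
    (i : N →ₗ[ℤ] M × ℤ) (p : (M × ℤ) →ₗ[ℤ] N)
    (hpi : ∀ n, p (i n) = n) (hli : ∀ n, l (i n) = 0)
    (hip : ∀ w, i (p w) = w - l w • (b, -(a : ℤ))) :
    Nonempty
      ((Polynomial (AddMonoidAlgebra F M) ⧸
          Ideal.span {(Polynomial.X : Polynomial (AddMonoidAlgebra F M)) ^ a -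
            Polynomial.C (AddMonoidAlgebra.single b (u : F))}) ≃ₐ[F]
        AddMonoidAlgebra F N) := by
  set I := Ideal.span {(Polynomial.X : Polynomial (AddMonoidAlgebra F M)) ^ a -
    Polynomial.C (AddMonoidAlgebra.single b (u : F))} with hI
  refine iso_of_splitting (Q := Polynomial (AddMonoidAlgebra F M) ⧸ I) u a ha b
    (Ideal.Quotient.mkₐ F I) ?_ ?_ ?_ l hl i p hpi hli hip
  · rw [← map_pow]
    exact Ideal.Quotient.eq.2 (Ideal.subset_span rfl)
  · exact fun φ ψ h => Ideal.Quotient.algHom_ext _ h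
  · intro φ hφ
    have hle : I ≤ RingHom.ker φ := (Ideal.span_singleton_le_iff_mem _).2 hφ
    exact ⟨Ideal.Quotient.liftₐ I φ fun x hx => hle hx, fun x => rfl⟩

/-- **Lemma 7.1 (torus cover).** Let `F` be a field, `r ≥ 0`, `u ∈ Fˣ`, and let
`a, b₁, …, b_r` be integers with `a > 0` and `gcd(a, b₁, …, b_r) = 1`. Then the quotient of
the polynomial ring `F[x₁^{±1},…,x_r^{±1}][z]` by the principal ideal generated by
`z^a - u·∏ x_j^{b_j}` is isomorphic as an `F`-algebra to the Laurent polynomial algebra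
`F[x₁^{±1},…,x_r^{±1}]`, i.e. to the group algebra of `ℤ^r` over `F`. -/
theorem torus_cover_iso (F : Type*) [Field F] (r : ℕ) (u : Fˣ) (a : ℕ) (b : Fin r → ℤ)
    (ha : 0 < a) (hgcd : Int.gcd (a : ℤ) (Finset.univ.gcd b) = 1) :
    Nonempty
      ((Polynomial (AddMonoidAlgebra F (Fin r → ℤ)) ⧸
          Ideal.span {(Polynomial.X : Polynomial (AddMonoidAlgebra F (Fin r → ℤ))) ^ a -
            Polynomial.C (AddMonoidAlgebra.single b (u : F))}) ≃ₐ[F]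
        AddMonoidAlgebra F (Fin r → ℤ)) := by
  obtain ⟨l, hl⟩ := exists_linear_form r a b hgcd
  obtain ⟨i, p, hpi, hli, hip⟩ := exists_splitting r l _ hl
  exact quotient_iso_of_splitting u a ha b l hl i p hpi hli hip
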